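/- For every natural number k and every ρ ∈ (0,1) there exists a constant C > 0 (depending only on k and ρ) such that: for every h > 0, every ρ-shape-regular compact convex set K ⊆ ℝ² with diameter at most h that contains a closed ball of radius ρ·h, and every polynomial vector field v = (p₁,p₂) : ℝ² → ℝ² whose components are polynomials of total degree at most k, one has h·∫_{∂K} ‖ε(v)(x)‖_F² dμH¹(x) ≤ C·∫_K ‖ε(v)(x)‖_F² dx, where ε(v)(x) := ½(Dv(x) + Dv(x)ᵀ) is the symmetric part of the Jacobian matrix Dv(x), ‖·‖_F is the Frobenius norm on 2×2 matrices, ∂K is the frontier of K, and μH¹ is the 1-dimensional Hausdorff measure. -/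

import Mathlib

/-!
The components of `ε(v)` are themselves polynomials of total degree at most `k`, so the bound holds
entry by entry and uses nothing about symmetric gradients beyond that. Two facts are combined.

* *Inverse estimate* (`sq_eval_le_of_closedBall_subset`). On the finite-dimensional space of
  polynomials of degree at most `k`, the sup norm over the unit disc is controlled by the `L²` norm
  over the disc of radius `ρ`, because a polynomial vanishing on a disc is zero. Since the space
  is stable under `x ↦ c + h x`, scaling gives `q(x)² ≤ C h⁻² ∫_K q²` for every `x ∈ K`.
* *Perimeter bound* (`hausdorffMeasure_frontier_le`). Radial projection from `c`, written with the
  gauge of `K - c`, parametrizes `∂K` by a map on `[-π, π]` with Lipschitz constant `h + h / ρ`,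
  so `μH[1] (∂K) ≤ 2π (1 + ρ⁻¹) h`.

Integrating the pointwise bound over `∂K` yields
`h ∫_{∂K} q² ≤ h · 2π (1 + ρ⁻¹) h · C h⁻² ∫_K q²`, in which the powers of `h` cancel.
-/

open MeasureTheory

/-- The Euclidean plane. -/
abbrev Plane := EuclideanSpace ℝ (Fin 2)

/-! ### Inverse estimate for polynomials -/

lemma continuous_eval (p : MvPolynomial (Fin 2) ℝ) :
    Continuous fun x : Plane => MvPolynomial.eval (fun l => x l) p := by
  have := MvPolynomial.continuous_eval p
  exact this.comp (by fun_prop)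

lemma integrableOn_sq_eval (p : MvPolynomial (Fin 2) ℝ) {K : Set Plane} (hK : IsCompact K) :
    IntegrableOn (fun x : Plane => (MvPolynomial.eval (fun l => x l) p) ^ 2) K :=
  ((continuous_eval p).pow 2).continuousOn.integrableOn_compact hK

lemma eq_zero_of_eval_eq_zero_on_ball {r : ℝ} (hr : 0 < r) (p : MvPolynomial (Fin 2) ℝ)
    (h : ∀ x ∈ Metric.ball (0 : Plane) r, MvPolynomial.eval (fun l => x l) p = 0) : p = 0 := by
  refine MvPolynomial.funext_set (fun _ => Set.Ioo (-(r / 2)) (r / 2))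
    (fun _ => Set.Ioo_infinite (by linarith)) fun x hx => ?_
  have h0 := hx 0 trivial
  have h1 := hx 1 trivial
  simp only [Set.mem_Ioo] at h0 h1
  rw [map_zero]
  refine h (WithLp.toLp 2 x) ?_
  rw [mem_ball_zero_iff, EuclideanSpace.norm_eq, Real.sqrt_lt' hr]
  simp only [Fin.sum_univ_two, Real.norm_eq_abs, sq_abs]
  nlinarith

lemma integral_sq_eval_pos {r : ℝ} (hr : 0 < r) (p : MvPolynomial (Fin 2) ℝ) (hp : p ≠ 0) :
    0 < ∫ y in Metric.closedBall (0 : Plane) r, (MvPolynomial.eval (fun l => y l) p) ^ 2 := by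
  have hc := continuous_eval p
  rw [setIntegral_pos_iff_support_of_nonneg_ae (Filter.Eventually.of_forall fun x => by positivity)
    (integrableOn_sq_eval p (isCompact_closedBall 0 r))]
  by_contra hcon
  refine hp (eq_zero_of_eval_eq_zero_on_ball hr p fun x hx => ?_)
  by_contra hne
  refine hcon (lt_of_lt_of_le (IsOpen.measure_pos volume
    (U := {y : Plane | MvPolynomial.eval (fun l => y l) p ≠ 0} ∩ Metric.ball 0 r)
    ((isOpen_ne_fun hc continuous_const).inter Metric.isOpen_ball) ⟨x, hne, hx⟩)
    (measure_mono ?_))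
  rintro y ⟨hy, hyr⟩
  exact ⟨by simpa using hy, Metric.ball_subset_closedBall hyr⟩

/-- Equivalence of norms on polynomials of degree at most `k`, on the reference configuration:
values in the unit disc are controlled by the `L²` norm over the disc of radius `r`. -/
lemma exists_sq_eval_le (k : ℕ) {r : ℝ} (hr : 0 < r) :
    ∃ C : ℝ, 0 < C ∧ ∀ p : MvPolynomial (Fin 2) ℝ, p.totalDegree ≤ k → ∀ x : Plane, ‖x‖ ≤ 1 →
      (MvPolynomial.eval (fun l => x l) p) ^ 2 ≤
        C * ∫ y in Metric.closedBall (0 : Plane) r, (MvPolynomial.eval (fun l => y l) p) ^ 2 := by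
  classical
  set S : Finset (Fin 2 →₀ ℕ) := (Finsupp.finite_of_degree_le (σ := Fin 2) k).toFinset with hS
  -- Polynomials are parametrized by their coefficient vectors `a : S → ℝ`.
  let P : (S → ℝ) → MvPolynomial (Fin 2) ℝ := fun a => ∑ s : S, MvPolynomial.monomial s.1 (a s)
  have hcoeff : ∀ a (s : S), (P a).coeff s.1 = a s := by
    intro a s
    simp only [P, MvPolynomial.coeff_sum, MvPolynomial.coeff_monomial]
    rw [Finset.sum_eq_single s]
    · simp
    · intro b _ hb
      simp [Subtype.coe_injective.ne hb]
    · simp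
  have hrep : ∀ p : MvPolynomial (Fin 2) ℝ, p.totalDegree ≤ k → P (fun s => p.coeff s.1) = p := by
    intro p hp
    have hsub : p.support ⊆ S := by
      intro s hs
      rw [hS, Set.Finite.mem_toFinset]
      exact (MvPolynomial.le_totalDegree hs).trans hp
    conv_rhs => rw [MvPolynomial.as_sum p]
    simp only [P]
    rw [Finset.sum_coe_sort S (fun s => MvPolynomial.monomial s (p.coeff s))]
    refine (Finset.sum_subset hsub fun s _ hs => ?_).symm
    rw [MvPolynomial.notMem_support_iff.mp hs, map_zero]
  have hsmul : ∀ (t : ℝ) a, P (t • a) = MvPolynomial.C t * P a := by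
    intro t a
    simp [P, Finset.mul_sum, MvPolynomial.C_mul_monomial]
  have hcont : Continuous fun z : (S → ℝ) × Plane =>
      MvPolynomial.eval (fun l => z.2 l) (P z.1) := by
    simp only [P, map_sum, MvPolynomial.eval_monomial, Finsupp.prod]
    fun_prop
  let A : (S → ℝ) → ℝ := fun a =>
    ∫ y in Metric.closedBall (0 : Plane) r, (MvPolynomial.eval (fun l => y l) (P a)) ^ 2
  have hA : Continuous A :=
    continuous_parametric_integral_of_continuous (μ := volume)
      (f := fun a (y : Plane) => (MvPolynomial.eval (fun l => y l) (P a)) ^ 2)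
      (by simpa only [Function.uncurry_def] using! hcont.pow 2) (isCompact_closedBall 0 r)
  have hApos : ∀ a, a ≠ 0 → 0 < A a := by
    intro a ha
    refine integral_sq_eval_pos hr _ fun h => ha ?_
    funext s
    rw [← hcoeff a s, h]; simp
  -- The quotient of the two squared norms is continuous, hence bounded, on the unit sphere.
  obtain ⟨C, hC⟩ := ((isCompact_sphere (0 : S → ℝ) 1).prod
    (isCompact_closedBall (0 : Plane) 1)).exists_bound_of_continuousOn
    (f := fun z => (MvPolynomial.eval (fun l => z.2 l) (P z.1)) ^ 2 / A z.1)
    (((hcont.pow 2).continuousOn).div (hA.comp continuous_fst).continuousOn fun z hz =>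
      (hApos _ (ne_zero_of_mem_unit_sphere ⟨z.1, hz.1⟩)).ne')
  refine ⟨max C 1, by positivity, fun p hp x hx => ?_⟩
  rw [← hrep p hp]
  generalize (fun s : S => p.coeff s.1) = a
  change _ ≤ max C 1 * A a
  by_cases ha : a = 0
  · have h0 : P a = 0 := by simp [P, ha]
    simp [A, h0]
  have hna : ‖a‖ ≠ 0 := norm_ne_zero_iff.mpr ha
  set b : S → ℝ := ‖a‖⁻¹ • a with hb
  have hab : a = ‖a‖ • b := by rw [hb, smul_smul, mul_inv_cancel₀ hna, one_smul]
  have hbn : ‖b‖ = 1 := by rw [hb, norm_smul, norm_inv, norm_norm, inv_mul_cancel₀ hna]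
  have hb0 : b ≠ 0 := by rw [← norm_ne_zero_iff, hbn]; exact one_ne_zero
  have h1 := hC (b, x) ⟨by simpa using hbn, by simpa using hx⟩
  have hbA := hApos b hb0
  rw [Real.norm_eq_abs, abs_of_nonneg (by positivity), div_le_iff₀ hbA] at h1
  have h2 : (MvPolynomial.eval (fun l => x l) (P b)) ^ 2 ≤ max C 1 * A b :=
    h1.trans (by gcongr; exact le_max_left _ _)
  have hAa : A a = ‖a‖ ^ 2 * A b := by
    simp only [A]
    conv_lhs => rw [hab, hsmul]
    rw [← integral_const_mul]
    simp [mul_pow]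
  have hE : MvPolynomial.eval (fun l => x l) (P a) =
      ‖a‖ * MvPolynomial.eval (fun l => x l) (P b) := by
    conv_lhs => rw [hab, hsmul]
    simp
  rw [hE, hAa, mul_pow, mul_left_comm]
  gcongr

/-- Precomposition with the affine map `x ↦ c + h x` preserves the degree bound. -/
lemma exists_affine_comp {k : ℕ} (p : MvPolynomial (Fin 2) ℝ) (hp : p.totalDegree ≤ k)
    (c : Plane) (h : ℝ) :
    ∃ q : MvPolynomial (Fin 2) ℝ, q.totalDegree ≤ k ∧ ∀ x : Plane,
      MvPolynomial.eval (fun l => x l) q = MvPolynomial.eval (fun l => (c + h • x) l) p := by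
  let L : Fin 2 → MvPolynomial (Fin 2) ℝ := fun i =>
    MvPolynomial.C (c i) + MvPolynomial.C h * MvPolynomial.X i
  have hL : ∀ i, (L i).totalDegree ≤ 1 := fun i => by
    refine (MvPolynomial.totalDegree_add _ _).trans (max_le (by simp) ?_)
    refine (MvPolynomial.totalDegree_mul _ _).trans ?_
    simp
  refine ⟨MvPolynomial.bind₁ L p, ?_, fun x => ?_⟩
  · rw [MvPolynomial.bind₁, MvPolynomial.aeval_def, MvPolynomial.eval₂_eq]
    refine MvPolynomial.totalDegree_finsetSum_le fun s hs => ?_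
    refine (MvPolynomial.totalDegree_mul _ _).trans ?_
    have h1 : (∏ i ∈ s.support, L i ^ s i).totalDegree ≤ ∑ i ∈ s.support, s i := by
      refine (MvPolynomial.totalDegree_finsetProd _ _).trans (Finset.sum_le_sum fun i _ => ?_)
      refine (MvPolynomial.totalDegree_pow _ _).trans ?_
      exact (Nat.mul_le_mul_left _ (hL i)).trans (by simp)
    have h2 : (∑ i ∈ s.support, s i) ≤ k := (MvPolynomial.le_totalDegree hs).trans hp
    rw [MvPolynomial.algebraMap_eq, MvPolynomial.totalDegree_C]
    omega
  · rw [← MvPolynomial.coe_aeval_eq_eval, ← MvPolynomial.coe_aeval_eq_eval]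
    simp only [RingHom.coe_coe, MvPolynomial.aeval_bind₁]
    congr 2
    ext i
    simp [L]

/-- Scaled inverse estimate: `q(x)² ≤ C h⁻² ∫_K q²` at every point `x` of a shape-regular `K`. -/
lemma sq_eval_le_of_closedBall_subset (k : ℕ) {ρ : ℝ} (hρ : 0 < ρ) :
    ∃ C : ℝ, 0 < C ∧ ∀ h : ℝ, 0 < h → ∀ K : Set Plane, IsCompact K → Metric.diam K ≤ h →
      ∀ c : Plane, Metric.closedBall c (ρ * h) ⊆ K →
      ∀ p : MvPolynomial (Fin 2) ℝ, p.totalDegree ≤ k → ∀ x ∈ K,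
      (MvPolynomial.eval (fun l => x l) p) ^ 2 ≤
        C * (h ^ 2)⁻¹ * ∫ y in K, (MvPolynomial.eval (fun l => y l) p) ^ 2 := by
  obtain ⟨C, hC0, hC⟩ := exists_sq_eval_le k hρ
  refine ⟨C, hC0, fun h hh K hK hd c hcK p hp x hx => ?_⟩
  obtain ⟨q, hq, hqe⟩ := exists_affine_comp p hp c h
  have hc : c ∈ K := hcK (Metric.mem_closedBall_self (by positivity))
  have hxc : ‖h⁻¹ • (x - c)‖ ≤ 1 := by
    rw [norm_smul, norm_inv, Real.norm_eq_abs, abs_of_pos hh, inv_mul_le_iff₀ hh, mul_one,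
      ← dist_eq_norm]
    exact (Metric.dist_le_diam_of_mem hK.isBounded hx hc).trans hd
  have h1 := hC q hq _ hxc
  rw [hqe] at h1
  simp only [hqe] at h1
  rw [smul_smul, mul_inv_cancel₀ hh.ne', one_smul, add_sub_cancel] at h1
  rw [Measure.setIntegral_comp_smul_of_pos volume
    (fun z : Plane => (MvPolynomial.eval (fun l => (c + z) l) p) ^ 2) _ hh,
    smul_closedBall _ _ hρ.le, smul_zero, Real.norm_eq_abs, abs_of_pos hh,
    finrank_euclideanSpace_fin] at h1
  have h2 : ∫ z in Metric.closedBall (0 : Plane) (h * ρ),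
      (MvPolynomial.eval (fun l => (c + z) l) p) ^ 2 =
      ∫ y in Metric.closedBall c (ρ * h), (MvPolynomial.eval (fun l => y l) p) ^ 2 := by
    rw [← (measurePreserving_add_left volume c).setIntegral_preimage_emb
      (measurableEmbedding_addLeft c)
      (fun y : Plane => (MvPolynomial.eval (fun l => y l) p) ^ 2)]
    congr 2
    simp [mul_comm]
  rw [h2, smul_eq_mul, ← mul_assoc] at h1
  refine h1.trans ?_
  gcongr
  · exact Filter.Eventually.of_forall fun y => sq_nonneg _
  · exact integrableOn_sq_eval p hK

/-! ### Perimeter of a shape-regular convex set -/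

/-- The standard parametrization of the unit circle. -/
noncomputable def circlePt (θ : ℝ) : Plane := !₂[Real.cos θ, Real.sin θ]

lemma norm_circlePt (θ : ℝ) : ‖circlePt θ‖ = 1 := by
  simp [EuclideanSpace.norm_eq, circlePt, Fin.sum_univ_two]

lemma norm_circlePt_sub_le (a b : ℝ) : ‖circlePt a - circlePt b‖ ≤ |a - b| := by
  rw [EuclideanSpace.norm_eq, Real.sqrt_le_left (abs_nonneg _)]
  simp only [Fin.sum_univ_two, Real.norm_eq_abs, sq_abs, circlePt, PiLp.sub_apply]
  have h1 := Real.one_sub_sq_div_two_le_cos (x := a - b)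
  rw [Real.cos_sub] at h1
  simp
  nlinarith [Real.sin_sq_add_cos_sq a, Real.sin_sq_add_cos_sq b]

/-- Perimeter bound for a shape-regular convex set, via radial projection from `c`. -/
lemma hausdorffMeasure_frontier_le {ρ h : ℝ} (hρ : 0 < ρ) (hh : 0 < h) {K : Set Plane}
    (hK : IsCompact K) (hconv : Convex ℝ K) (hd : Metric.diam K ≤ h) {c : Plane}
    (hcK : Metric.closedBall c (ρ * h) ⊆ K) :
    μH[1] (frontier K) ≤ ENNReal.ofReal (2 * Real.pi * (1 + ρ⁻¹) * h) := by
  have hc : c ∈ K := hcK (Metric.mem_closedBall_self (by positivity))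
  let e : Plane ≃ₜ Plane := Homeomorph.addLeft c
  let L : Set Plane := e ⁻¹' K
  have hLconv : Convex ℝ L := hconv.translate_preimage_right c
  have hr : 0 < ρ * h := by positivity
  have hball : Metric.ball (0 : Plane) (ρ * h) ⊆ L := by
    intro y hy
    refine hcK ?_
    rw [Metric.mem_closedBall, dist_eq_norm]
    simpa [e] using (mem_ball_zero_iff.mp hy).le
  have hLh : L ⊆ Metric.closedBall 0 h := by
    intro y hy
    have := (Metric.dist_le_diam_of_mem hK.isBounded hy hc).trans hd
    simpa [e] using this
  have hL0 : L ∈ nhds (0 : Plane) := Filter.mem_of_superset (Metric.ball_mem_nhds 0 hr) hball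
  let g : ℝ → ℝ := fun θ => gauge L (circlePt θ)
  have hglb : ∀ θ, h⁻¹ ≤ g θ := by
    intro θ
    have h1 := le_gauge_of_subset_closedBall (absorbent_nhds_zero hL0) hh.le hLh (x := circlePt θ)
    rwa [norm_circlePt, one_div] at h1
  have hgpos : ∀ θ, 0 < g θ := fun θ => (inv_pos.mpr hh).trans_le (hglb θ)
  have hginv : ∀ θ, (g θ)⁻¹ ≤ h := fun θ => inv_le_of_inv_le₀ hh (hglb θ)
  have hgl : ∀ a b, |g a - g b| ≤ (ρ * h)⁻¹ * |a - b| := by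
    intro a b
    have h1 := (hLconv.lipschitzWith_gauge (r := ⟨ρ * h, hr.le⟩) hr hball).dist_le_mul
      (circlePt a) (circlePt b)
    rw [Real.dist_eq, dist_eq_norm] at h1
    refine h1.trans ?_
    change (ρ * h)⁻¹ * _ ≤ _
    gcongr
    exact norm_circlePt_sub_le a b
  have hginvl : ∀ a b, |(g a)⁻¹ - (g b)⁻¹| ≤ h / ρ * |a - b| := by
    intro a b
    have h1 : (g a)⁻¹ - (g b)⁻¹ = (g b - g a) * ((g a)⁻¹ * (g b)⁻¹) := by
      have := (hgpos a).ne'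
      have := (hgpos b).ne'
      field_simp
    have ha := inv_pos.mpr (hgpos a)
    have hb := inv_pos.mpr (hgpos b)
    rw [h1, abs_mul, abs_of_pos (mul_pos ha hb), abs_sub_comm]
    calc |g a - g b| * ((g a)⁻¹ * (g b)⁻¹)
        ≤ ((ρ * h)⁻¹ * |a - b|) * (h * h) := by
          gcongr
          · exact hgl a b
          · exact hginv a
          · exact hginv b
      _ = h / ρ * |a - b| := by field_simp
  let f : ℝ → Plane := fun θ => c + (g θ)⁻¹ • circlePt θ
  have hfl : LipschitzWith (Real.toNNReal (h + h / ρ)) f := by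
    refine LipschitzWith.of_dist_le_mul fun a b => ?_
    rw [Real.coe_toNNReal _ (by positivity), dist_eq_norm, Real.dist_eq]
    have h1 : f a - f b = (g a)⁻¹ • (circlePt a - circlePt b) +
        ((g a)⁻¹ - (g b)⁻¹) • circlePt b := by
      simp only [f, smul_sub, sub_smul]; abel
    rw [h1]
    refine (norm_add_le _ _).trans ?_
    rw [norm_smul, norm_smul, norm_circlePt, mul_one, Real.norm_eq_abs, Real.norm_eq_abs,
      abs_of_pos (inv_pos.mpr (hgpos a)), add_mul]
    gcongr
    · exact hginv a
    · exact norm_circlePt_sub_le a b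
    · exact hginvl a b
  have hsub : frontier K ⊆ f '' Set.Icc (-Real.pi) Real.pi := by
    intro x hx
    have hy : e.symm x ∈ frontier L := by
      rw [← e.preimage_frontier]; simpa using hx
    have hg1 : gauge L (e.symm x) = 1 := (gauge_eq_one_iff_mem_frontier hLconv hL0).mpr hy
    set y := e.symm x with hyx
    have hxy : x = c + y := (e.apply_symm_apply x).symm
    -- Polar coordinates of `y`, read off from the corresponding complex number.
    let z : ℂ := ⟨y 0, y 1⟩
    have hpol : y = ‖z‖ • circlePt z.arg := by
      ext i
      fin_cases i
      · simp [circlePt, z]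
      · simp [circlePt, z]
    refine ⟨z.arg, ⟨(Complex.neg_pi_lt_arg z).le, Complex.arg_le_pi z⟩, ?_⟩
    have h2 : ‖z‖ * g z.arg = 1 := by
      rw [hpol, gauge_smul_of_nonneg (norm_nonneg z), smul_eq_mul] at hg1
      exact hg1
    simp only [f]
    rw [← eq_inv_of_mul_eq_one_left h2, ← hpol, hxy]
  refine (measure_mono hsub).trans ((hfl.hausdorffMeasure_image_le zero_le_one _).trans ?_)
  rw [hausdorffMeasure_real, Real.volume_Icc, ENNReal.rpow_one]
  change ENNReal.ofReal (h + h / ρ) * _ ≤ _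
  rw [← ENNReal.ofReal_mul (by positivity)]
  refine ENNReal.ofReal_le_ofReal (le_of_eq ?_)
  field_simp
  ring

/-! ### Partial derivatives of polynomial functions -/

lemma hasFDerivAt_eval (p : MvPolynomial (Fin 2) ℝ) (x : Plane) :
    HasFDerivAt (fun y : Plane => MvPolynomial.eval (fun l => y l) p)
      (∑ j, MvPolynomial.eval (fun l => x l) (MvPolynomial.pderiv j p) •
        (EuclideanSpace.proj j : Plane →L[ℝ] ℝ)) x := by
  induction p using MvPolynomial.induction_on with
  | C a => simpa using hasFDerivAt_const a x
  | add p q hp hq =>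
    simp only [map_add, add_smul, Finset.sum_add_distrib]
    exact hp.add hq
  | mul_X p i hp =>
    have hX : HasFDerivAt (fun y : Plane => y i) (EuclideanSpace.proj i : Plane →L[ℝ] ℝ) x :=
      (EuclideanSpace.proj i : Plane →L[ℝ] ℝ).hasFDerivAt
    simp only [map_mul, MvPolynomial.eval_X]
    refine (hp.mul hX).congr_fderiv ?_
    ext v
    fin_cases i <;>
      simp [MvPolynomial.pderiv_X, Fin.sum_univ_two, Pi.single_apply] <;> ring

lemma fderiv_eval_single (p : MvPolynomial (Fin 2) ℝ) (x : Plane) (j : Fin 2) :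
    fderiv ℝ (fun y : Plane => MvPolynomial.eval (fun l => y l) p) x
      (EuclideanSpace.single j (1 : ℝ)) =
      MvPolynomial.eval (fun l => x l) (MvPolynomial.pderiv j p) := by
  rw [(hasFDerivAt_eval p x).fderiv]
  fin_cases j <;> simp [Fin.sum_univ_two]

lemma totalDegree_pderiv_le {k : ℕ} (p : MvPolynomial (Fin 2) ℝ) (hp : p.totalDegree ≤ k)
    (j : Fin 2) : (MvPolynomial.pderiv j p).totalDegree ≤ k := by
  rw [MvPolynomial.totalDegree, Finset.sup_le_iff]
  intro m hm
  rw [MvPolynomial.mem_support_iff, MvPolynomial.coeff_pderiv] at hm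
  have h1 : m + Finsupp.single j 1 ∈ p.support := by
    rw [MvPolynomial.mem_support_iff]
    intro h
    simp [h] at hm
  have h2 := (MvPolynomial.le_totalDegree h1).trans hp
  change (m + Finsupp.single j 1).degree ≤ k at h2
  rw [map_add] at h2
  change m.degree ≤ k
  omega

/-! ### The trace bound -/

/-- Elementwise trace bound for symmetric gradients of polynomial vector fields: for
shape-regular compact convex `K ⊆ ℝ²` of diameter at most `h` containing a ball of
radius `ρ·h`, and a vector field whose two components are polynomials of total degree
at most `k`, `h ∫_{∂K} ‖ε(v)‖_F² dμH¹ ≤ C ∫_K ‖ε(v)‖_F²`, where `ε(v)` is the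
symmetric part of the Jacobian; `C` depends only on `k` and `ρ`. -/
theorem symmetric_gradient_trace_bound (k : ℕ) (ρ : ℝ) (hρ : ρ ∈ Set.Ioo (0 : ℝ) 1) :
    ∃ C : ℝ, 0 < C ∧
      ∀ h : ℝ, 0 < h →
      ∀ K : Set (EuclideanSpace ℝ (Fin 2)), IsCompact K → Convex ℝ K →
        Metric.diam K ≤ h →
        (∃ c : EuclideanSpace ℝ (Fin 2), Metric.closedBall c (ρ * h) ⊆ K) →
      ∀ P : Fin 2 → MvPolynomial (Fin 2) ℝ, (∀ i, (P i).totalDegree ≤ k) →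
        -- Jacobian matrix entries of the polynomial vector field
        (let J : EuclideanSpace ℝ (Fin 2) → Fin 2 → Fin 2 → ℝ := fun x i j =>
            fderiv ℝ (fun y : EuclideanSpace ℝ (Fin 2) =>
              MvPolynomial.eval (fun l => y l) (P i)) x (EuclideanSpace.single j (1 : ℝ));
        -- symmetric part ε(v) = ½(Dv + Dvᵀ)
        let eps : EuclideanSpace ℝ (Fin 2) → Fin 2 → Fin 2 → ℝ := fun x i j =>
            (J x i j + J x j i) / 2;
        h * (∫ x in frontier K, (∑ i, ∑ j, (eps x i j) ^ 2) ∂(μH[1])) ≤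
          C * ∫ x in K, ∑ i, ∑ j, (eps x i j) ^ 2) := by
  obtain ⟨C, hC0, hC⟩ := sq_eval_le_of_closedBall_subset k hρ.1
  have hρ0 : 0 < ρ := hρ.1
  have hpi := Real.pi_pos
  set M : ℝ := 2 * Real.pi * (1 + ρ⁻¹) with hM
  have hM0 : 0 < M := by positivity
  refine ⟨M * C, by positivity, ?_⟩
  rintro h hh K hK hconv hd ⟨c, hcK⟩ P hP
  intro J eps
  let Q : Fin 2 → Fin 2 → MvPolynomial (Fin 2) ℝ := fun i j =>
    MvPolynomial.C (1 / 2) * (MvPolynomial.pderiv j (P i) + MvPolynomial.pderiv i (P j))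
  have hQ : ∀ i j, (Q i j).totalDegree ≤ k := fun i j => by
    refine (MvPolynomial.totalDegree_mul _ _).trans ?_
    rw [MvPolynomial.totalDegree_C, zero_add]
    exact (MvPolynomial.totalDegree_add _ _).trans
      (max_le (totalDegree_pderiv_le _ (hP i) j) (totalDegree_pderiv_le _ (hP j) i))
  have heps : ∀ x i j, eps x i j = MvPolynomial.eval (fun l => x l) (Q i j) := by
    intro x i j
    simp only [eps, J, Q]
    rw [fderiv_eval_single, fderiv_eval_single]
    simp only [map_mul, map_add, MvPolynomial.eval_C]
    ring
  simp only [heps]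
  set I : ℝ := ∫ x in K, ∑ i, ∑ j, (MvPolynomial.eval (fun l => x l) (Q i j)) ^ 2 with hI
  have hIsum : I = ∑ i, ∑ j, ∫ x in K, (MvPolynomial.eval (fun l => x l) (Q i j)) ^ 2 := by
    rw [hI, integral_finsetSum _ fun i _ => integrable_finsetSum _ fun j _ =>
      integrableOn_sq_eval (Q i j) hK]
    exact Finset.sum_congr rfl fun i _ => integral_finsetSum _ fun j _ =>
      integrableOn_sq_eval (Q i j) hK
  have hI0 : 0 ≤ I := integral_nonneg fun x => by positivity
  have hpt : ∀ x ∈ frontier K,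
      ‖∑ i, ∑ j, (MvPolynomial.eval (fun l => x l) (Q i j)) ^ 2‖ ≤ C * (h ^ 2)⁻¹ * I := by
    intro x hx
    have hxK : x ∈ K := hK.isClosed.frontier_subset hx
    rw [Real.norm_eq_abs, abs_of_nonneg (by positivity), hIsum]
    simp only [Finset.mul_sum]
    exact Finset.sum_le_sum fun i _ => Finset.sum_le_sum fun j _ =>
      hC h hh K hK hd c hcK (Q i j) (hQ i j) x hxK
  have hper := hausdorffMeasure_frontier_le hρ0 hh hK hconv hd hcK
  have h1 := norm_setIntegral_le_of_norm_le_const (hper.trans_lt ENNReal.ofReal_lt_top) hpt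
  have h2 : (μH[1]).real (frontier K) ≤ M * h := ENNReal.toReal_le_of_le_ofReal (by positivity) hper
  calc h * _ ≤ h * (C * (h ^ 2)⁻¹ * I * (M * h)) := by
        gcongr
        exact (Real.le_norm_self _).trans (h1.trans (by gcongr))
    _ = M * C * I := by field_simp
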